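/- Let d ≥ 3 be an integer, m = (d−2)/(d+2), and let v : [0,T) × ℝ^d → (0,∞) be a smooth positive solution of the fast diffusion equation ∂v/∂t = Δ(v^m) such that J(t) = ∫_{ℝ^d} v(t,x)^{2d/(d+2)} dx is finite and differentiable with J'(t) = −(m+1) ∫ |∇ v(t)^m|² dx. Then J'(t) ≤ −(2d/(d+2)) S_d^{−1} J(t)^{1−2/d} for all t, and consequently J(t)^{2/d} ≤ J(0)^{2/d} − (4/((d+2) S_d)) t; in particular J must vanish by time T ≤ ((d+2)/4) S_d J(0)^{2/d}. -/

import Mathlib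

open MeasureTheory Real

noncomputable section

/-- Surface area of the unit sphere `𝕊^{d-1} ⊆ ℝ^d`. -/
def sphereArea (d : ℕ) : ℝ := 2 * Real.pi ^ ((d : ℝ) / 2) / Real.Gamma ((d : ℝ) / 2)

/-- Green function of `-Δ` on `ℝ^d`, `d ≥ 3`: `G_d(x) = |x|^{2-d} / ((d-2)|𝕊^{d-1}|)`. -/
def greenKernel (d : ℕ) (x : EuclideanSpace ℝ (Fin d)) : ℝ :=
  ‖x‖ ^ ((2 : ℝ) - d) / (((d : ℝ) - 2) * sphereArea d)

/-- `(−Δ)⁻¹ v`, the convolution of `v` with the Green function of `-Δ` on `ℝ^d`. -/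
def invLap (d : ℕ) (v : EuclideanSpace ℝ (Fin d) → ℝ) (x : EuclideanSpace ℝ (Fin d)) : ℝ :=
  ∫ y, greenKernel d (x - y) * v y

/-- The Aubin–Talenti (optimal Sobolev) constant
`S_d = (1/(π d (d−2))) (Γ(d)/Γ(d/2))^{2/d}`. -/
def sobolevConst (d : ℕ) : ℝ :=
  1 / (Real.pi * d * ((d : ℝ) - 2)) *
    (Real.Gamma (d : ℝ) / Real.Gamma ((d : ℝ) / 2)) ^ ((2 : ℝ) / (d : ℝ))

/-- Membership in `D^{1,2}(ℝ^d)`: a (weakly) differentiable function with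
`∇u ∈ L²` and `u ∈ L^{2*}`, `2* = 2d/(d-2)`. -/
def MemD12 (d : ℕ) (u : EuclideanSpace ℝ (Fin d) → ℝ) : Prop :=
  Differentiable ℝ u ∧
  Integrable (fun x => ‖gradient u x‖ ^ 2) ∧
  Integrable (fun x => |u x| ^ (2 * (d : ℝ) / ((d : ℝ) - 2)))

/-- The `L^p` norm of `u`, written with real exponents: `(∫ |u|^p)^{1/p}`. -/
def lpNorm' {d : ℕ} (p : ℝ) (u : EuclideanSpace ℝ (Fin d) → ℝ) : ℝ :=
  (∫ x, |u x| ^ p) ^ (1 / p)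

/-- The Laplacian `Δu = ∑ ∂²u/∂x_i²`. -/
def lap (d : ℕ) (u : EuclideanSpace ℝ (Fin d) → ℝ) (x : EuclideanSpace ℝ (Fin d)) : ℝ :=
  ∑ i : Fin d, iteratedFDeriv ℝ 2 u x ![EuclideanSpace.single i 1, EuclideanSpace.single i 1]



/-- the closed cube `[-L, L]^n` -/
def bx (n : ℕ) (L : ℝ) : Set (Fin n → ℝ) := Set.Icc (fun _ => -L) (fun _ => L)

lemma bx_compact (n : ℕ) (L : ℝ) : IsCompact (bx n L) := isCompact_Icc

lemma bx_meas (n : ℕ) (L : ℝ) : MeasurableSet (bx n L) := measurableSet_Icc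

lemma bx_int {n : ℕ} {L : ℝ} {ψ : (Fin n → ℝ) → ℝ} (h : Continuous ψ) :
    IntegrableOn ψ (bx n L) := h.continuousOn.integrableOn_compact (bx_compact n L)

lemma insertNth_cont {n : ℕ} (i : Fin (n + 1)) :
    Continuous (fun p : (Fin n → ℝ) × ℝ => (i.insertNth p.2 p.1 : Fin (n + 1) → ℝ)) := by
  fun_prop

lemma bx_fubini {n : ℕ} {L : ℝ} (hL : 0 < L) (i : Fin (n + 1)) {ψ : (Fin (n + 1) → ℝ) → ℝ}
    (h : Continuous ψ) :
    ∫ x in bx (n + 1) L, ψ x =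
      ∫ x' in bx n L, ∫ s in (-L)..L, ψ (i.insertNth s x') := by
  have hmp := (volume_preserving_piFinSuccAbove (fun _ : Fin (n + 1) => ℝ) i).symm
  have hpre : (MeasurableEquiv.piFinSuccAbove (fun _ : Fin (n + 1) => ℝ) i).symm ⁻¹' (bx (n + 1) L)
      = Set.Icc (-L) L ×ˢ bx n L := by
    ext ⟨s, x⟩
    simp only [bx, Set.mem_preimage, Set.mem_prod]
    exact Fin.insertNth_mem_Icc
  rw [← hmp.setIntegral_preimage_emb (MeasurableEquiv.measurableEmbedding _), hpre]
  rw [Measure.volume_eq_prod, ← Measure.prod_restrict, integral_prod_symm]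
  · refine setIntegral_congr_fun (bx_meas n L) fun x' _ => ?_
    rw [intervalIntegral.integral_of_le (by linarith), integral_Icc_eq_integral_Ioc]
    rfl
  · have : Continuous (fun p : ℝ × (Fin n → ℝ) =>
        ψ ((MeasurableEquiv.piFinSuccAbove (fun _ : Fin (n + 1) => ℝ) i).symm p)) := by
      have := h.comp ((insertNth_cont i).comp continuous_swap)
      exact this
    rw [Measure.prod_restrict]
    exact this.continuousOn.integrableOn_compact (isCompact_Icc.prod (bx_compact n L))

lemma marg_cont {n : ℕ} (L : ℝ) {F : (Fin (n + 1) → ℝ) → ℝ} (h : Continuous F) :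
    Continuous (fun x' : Fin n → ℝ => ∫ s in (-L)..L, F (Fin.cons s x')) := by
  apply intervalIntegral.continuous_parametric_intervalIntegral_of_continuous'
  exact h.comp (by fun_prop)

lemma bx_fubini0 {n : ℕ} {L : ℝ} (hL : 0 < L) {ψ : (Fin (n + 1) → ℝ) → ℝ}
    (h : Continuous ψ) :
    ∫ x in bx (n + 1) L, ψ x =
      ∫ x' in bx n L, ∫ s in (-L)..L, ψ (Fin.cons s x') := by
  rw [bx_fubini hL 0 h]; simp only [Fin.insertNth_zero']

lemma deriv_implicit {Φ C g : ℝ → ℝ} {a b s : ℝ} (hΦ : HasStrictDerivAt Φ a (g s)) (ha : a ≠ 0)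
    (hC : HasDerivAt C b s) (hg : ContinuousAt g s) (heq : ∀ᶠ r in nhds s, Φ (g r) = C r) :
    HasDerivAt g (b / a) s := by
  have h1 := hΦ.to_localInverse ha
  have h2 := (hΦ.hasStrictFDerivAt_equiv ha).eventually_left_inverse
  have h0 : Φ (g s) = C s := heq.self_of_nhds
  rw [h0] at h1
  have h3 := h1.hasDerivAt.comp s hC
  have h4 : (hΦ.localInverse Φ a (g s) ha ∘ C) =ᶠ[nhds s] g := by
    filter_upwards [heq, hg.eventually h2] with r hr hr2
    simp only [Function.comp, ← hr]
    exact hr2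
  have h5 := h3.congr_of_eventuallyEq h4.symm
  rw [div_eq_inv_mul]
  exact h5

/-- The Knothe map between two positive continuous densities on the cube. -/
theorem knothe (L : ℝ) (hL : 0 < L) : ∀ (n : ℕ) (F G : (Fin n → ℝ) → ℝ),
    Continuous F → Continuous G → (∀ x, 0 < F x) → (∀ x, 0 < G x) →
    ∫ x in bx n L, F x = ∫ x in bx n L, G x →
    ∃ T lam : (Fin n → ℝ) → (Fin n → ℝ), Continuous T ∧ Continuous lam ∧
      (∀ x i, |T x i| ≤ L) ∧ (∀ x i, 0 < lam x i) ∧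
      (∀ x, F x = G (T x) * ∏ i, lam x i) ∧
      (∀ x i, x i ∈ Set.Ioo (-L) L →
        HasDerivAt (fun s => T (Function.update x i s) i) (lam x i) (x i)) ∧
      (∀ ψ : (Fin n → ℝ) → ℝ, Continuous ψ →
        ∫ x in bx n L, ψ (T x) * ∏ i, lam x i = ∫ x in bx n L, ψ x) := by
  intro n
  induction n with
  | zero =>
    intro F G hF hG hFp hGp hFG
    refine ⟨id, fun _ => 0, continuous_id, continuous_const, fun x i => i.elim0,
      fun x i => i.elim0, ?_, fun x i => i.elim0, ?_⟩
    · intro x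
      have h1 : ∀ H : (Fin 0 → ℝ) → ℝ, ∫ x in bx 0 L, H x = H x := by
        intro H
        have : bx 0 L = Set.univ := by
          ext y; simp [bx, Subsingleton.elim y (fun _ => L)]
        rw [this, Measure.restrict_univ, integral_unique]
        have h2 : (volume : Measure (Fin 0 → ℝ)).real Set.univ = 1 := by
          simp [Measure.real, volume_pi]
        rw [h2, one_smul]
        exact congrArg H (Subsingleton.elim _ _)
      rw [h1, h1] at hFG
      simpa using hFG
    · intro ψ hψ; simp
  | succ n ih =>
    intro F G hF hG hFp hGp hFG
    have hFc : ∀ x' : Fin n → ℝ, Continuous (fun s : ℝ => F (Fin.cons s x')) := fun x' =>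
      hF.comp (by fun_prop)
    have hGc : ∀ x' : Fin n → ℝ, Continuous (fun s : ℝ => G (Fin.cons s x')) := fun x' =>
      hG.comp (by fun_prop)
    obtain ⟨T', lam', hT'c, hlc, hT'b, hlp, hFGT, hder, hpush⟩ :=
      ih (fun x' => ∫ s in (-L)..L, F (Fin.cons s x')) (fun x' => ∫ s in (-L)..L, G (Fin.cons s x'))
        (marg_cont L hF) (marg_cont L hG)
        (fun x' => intervalIntegral.intervalIntegral_pos_of_pos
          ((hFc x').intervalIntegrable _ _) (fun s => hFp _) (by linarith))
        (fun x' => intervalIntegral.intervalIntegral_pos_of_pos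
          ((hGc x').intervalIntegrable _ _) (fun s => hGp _) (by linarith))
        (by rw [← bx_fubini0 hL hF, ← bx_fubini0 hL hG, hFG])
    have hPp : ∀ x', 0 < ∏ i, lam' x' i := fun x' => Finset.prod_pos fun i _ => hlp x' i
    have hPc : Continuous fun x' => ∏ i, lam' x' i :=
      continuous_finsetProd _ fun i _ => (continuous_apply i).comp hlc
    set P : (Fin n → ℝ) → ℝ := fun x' => ∏ i, lam' x' i with hP
    -- clamped coordinate
    let cl : ℝ → ℝ := fun s => max (-L) (min s L)
    have hclc : Continuous cl := by fun_prop
    have hcl1 : ∀ s, -L ≤ cl s := fun s => le_max_left _ _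
    have hcl2 : ∀ s, cl s ≤ L := fun s => max_le (by linarith) (min_le_right _ _)
    have hcl3 : ∀ s, s ∈ Set.Icc (-L) L → cl s = s := fun s hs => by
      simp [cl, min_eq_left hs.2, max_eq_right hs.1]
    let Φ : (Fin n → ℝ) → ℝ → ℝ := fun y q => ∫ r in (-L)..q, G (Fin.cons r y)
    let C : (Fin (n + 1) → ℝ) → ℝ := fun x =>
      (∫ r in (-L)..(cl (x 0)), F (Fin.cons r (Fin.tail x))) / P (Fin.tail x)
    have htail : Continuous (fun x : Fin (n + 1) → ℝ => (Fin.tail x : Fin n → ℝ)) := by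
      unfold Fin.tail; fun_prop
    have hCc : Continuous C := by
      apply Continuous.div
      · refine intervalIntegral.continuous_parametric_intervalIntegral_of_continuous ?_ ?_
        · exact hF.comp (by unfold Fin.tail; fun_prop)
        · exact hclc.comp (continuous_apply 0)
      · exact hPc.comp htail
      · exact fun x => (hPp _).ne'
    have hΦd : ∀ y q, HasStrictDerivAt (Φ y) (G (Fin.cons q y)) q := fun y q =>
      (hGc y).integral_hasStrictDerivAt (-L) q
    have hΦm : ∀ y, StrictMono (Φ y) := fun y => by
      apply strictMono_of_deriv_pos
      intro q
      rw [(hΦd y q).hasDerivAt.deriv]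
      exact hGp _
    have hΦc : ∀ q, Continuous fun y => Φ y q := fun q => by
      apply intervalIntegral.continuous_parametric_intervalIntegral_of_continuous'
      exact hG.comp (by fun_prop)
    have hex : ∀ x : Fin (n + 1) → ℝ, ∃ q ∈ Set.Icc (-L) L, Φ (T' (Fin.tail x)) q = C x := by
      intro x
      have hcont : ContinuousOn (Φ (T' (Fin.tail x))) (Set.Icc (-L) L) := fun q _ =>
        (hΦd _ q).hasDerivAt.continuousAt.continuousWithinAt
      have := intermediate_value_Icc (by linarith : -L ≤ L) hcont
      apply this
      constructor
      · simp only [Φ, C, intervalIntegral.integral_same]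
        exact div_nonneg (intervalIntegral.integral_nonneg (hcl1 _) fun u _ => (hFp _).le)
          (hPp _).le
      · simp only [C]
        rw [div_le_iff₀ (hPp _)]
        have := hFGT (Fin.tail x)
        simp only [Φ]
        rw [← this]
        apply intervalIntegral.integral_mono_interval le_rfl (hcl1 _) (hcl2 _)
        · exact Filter.Eventually.of_forall fun u => (hFp _).le
        · exact (hFc _).intervalIntegrable _ _
    choose τ hτI hτ using hex
    have hτc : Continuous τ := by
      rw [continuous_iff_continuousAt]
      intro x
      refine tendsto_order.2 ⟨fun a ha => ?_, fun a ha => ?_⟩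
      · have h1 : Φ (T' (Fin.tail x)) a < C x := by rw [← hτ]; exact hΦm _ ha
        have h2 := (((hΦc a).comp (hT'c.comp htail)).tendsto x).eventually_lt (hCc.tendsto x) h1
        filter_upwards [h2] with y hy
        rw [← hτ] at hy
        exact (hΦm _).lt_iff_lt.1 hy
      · have h1 : C x < Φ (T' (Fin.tail x)) a := by rw [← hτ]; exact hΦm _ ha
        have h2 := (hCc.tendsto x).eventually_lt (((hΦc a).comp (hT'c.comp htail)).tendsto x) h1
        filter_upwards [h2] with y hy
        rw [← hτ] at hy
        exact (hΦm _).lt_iff_lt.1 hy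
    let T : (Fin (n + 1) → ℝ) → (Fin (n + 1) → ℝ) := fun x => Fin.cons (τ x) (T' (Fin.tail x))
    have hTc : Continuous T := by
      have h1 := hT'c.comp htail
      refine continuous_pi fun i => ?_
      refine Fin.cases ?_ (fun j => ?_) i
      · simpa [T] using hτc
      · simp only [T, Fin.cons_succ]; exact (continuous_apply j).comp h1
    let l0 : (Fin (n + 1) → ℝ) → ℝ := fun x => F x / P (Fin.tail x) / G (T x)
    have hl0c : Continuous l0 := (hF.div (hPc.comp htail) fun x => (hPp _).ne').div
      (hG.comp hTc) fun x => (hGp _).ne'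
    let lam : (Fin (n + 1) → ℝ) → (Fin (n + 1) → ℝ) := fun x => Fin.cons (l0 x) (lam' (Fin.tail x))
    have hlamc : Continuous lam := by
      have h1 := hlc.comp htail
      refine continuous_pi fun i => ?_
      refine Fin.cases ?_ (fun j => ?_) i
      · simpa [lam] using hl0c
      · simp only [lam, Fin.cons_succ]; exact (continuous_apply j).comp h1
    have hd0 : ∀ x : Fin (n + 1) → ℝ, x 0 ∈ Set.Ioo (-L) L →
        HasDerivAt (fun s => τ (Function.update x 0 s)) (l0 x) (x 0) := by
      intro x hx
      have hC : HasDerivAt (fun s => (∫ r in (-L)..s, F (Fin.cons r (Fin.tail x))) / P (Fin.tail x))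
          (F x / P (Fin.tail x)) (x 0) := by
        have := ((hFc (Fin.tail x)).integral_hasStrictDerivAt (-L) (x 0)).hasDerivAt
        simp only [Fin.cons_self_tail] at this
        exact this.div_const _
      have hg : ContinuousAt (fun s => τ (Function.update x 0 s)) (x 0) :=
        (hτc.comp (continuous_const.update 0 continuous_id)).continuousAt
      have hΦ := hΦd (T' (Fin.tail x)) (τ (Function.update x 0 (x 0)))
      refine (deriv_implicit (g := fun s => τ (Function.update x 0 s)) hΦ (hGp _).ne' hC hg ?_).congr_deriv ?_
      · filter_upwards [Icc_mem_nhds hx.1 hx.2] with r hr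
        have := hτ (Function.update x 0 r)
        simp only [Fin.tail_update_zero] at this
        rw [this]
        simp only [C, Fin.tail_update_zero, Function.update_self, hcl3 r hr]
      · simp only [l0, T, Function.update_eq_self]
    refine ⟨T, lam, hTc, hlamc, ?_, ?_, ?_, ?_, ?_⟩
    · intro x i
      refine Fin.cases ?_ (fun j => ?_) i
      · simp only [T, Fin.cons_zero]; exact abs_le.2 (hτI x)
      · simp only [T, Fin.cons_succ]; exact hT'b _ _
    · intro x i
      refine Fin.cases ?_ (fun j => ?_) i
      · simp only [lam, Fin.cons_zero]; exact div_pos (div_pos (hFp _) (hPp _)) (hGp _)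
      · simp only [lam, Fin.cons_succ]; exact hlp _ _
    · intro x
      rw [Fin.prod_univ_succ]
      simp only [lam, Fin.cons_zero, Fin.cons_succ]
      have h1 := (hPp (Fin.tail x)).ne'
      have h2 := (hGp (T x)).ne'
      simp only [l0, hP] at *
      field_simp
    · intro x i
      refine Fin.cases ?_ (fun j => ?_) i
      · intro hx
        simpa [T, lam] using hd0 x hx
      · intro hx
        have := hder (Fin.tail x) j hx
        simp only [T, lam, Fin.tail_update_succ, Fin.cons_succ]; exact this
    · intro ψ hψ
      have hψc : ∀ x' : Fin n → ℝ, Continuous (fun s : ℝ => ψ (Fin.cons s x')) := fun x' =>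
        hψ.comp (by fun_prop)
      have hcontI : Continuous fun x => ψ (T x) * ∏ i, lam x i :=
        (hψ.comp hTc).mul (continuous_finsetProd _ fun i _ => (continuous_apply i).comp hlamc)
      rw [bx_fubini0 hL hcontI, bx_fubini0 hL hψ, ← hpush _ (marg_cont L hψ)]
      refine setIntegral_congr_fun (bx_meas n L) fun x' _ => ?_
      have e1 : ∀ s, ψ (T (Fin.cons s x')) * ∏ i, lam (Fin.cons s x') i =
          (((fun r => ψ (Fin.cons r (T' x'))) ∘ fun s => τ (Fin.cons s x')) s *
            l0 (Fin.cons s x')) * P x' := by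
        intro s
        rw [Fin.prod_univ_succ]
        simp only [lam, Fin.cons_zero, Fin.cons_succ, T, Fin.tail_cons, Function.comp, hP]
        ring
      simp_rw [e1]
      rw [intervalIntegral.integral_mul_const]
      congr 1
      have hcs : Continuous fun s : ℝ => (Fin.cons s x' : Fin (n + 1) → ℝ) := by fun_prop
      rw [intervalIntegral.integral_comp_mul_deriv'']
      · have hτa : τ (Fin.cons (-L) x') = -L := by
          apply (hΦm (T' x')).injective
          have := hτ (Fin.cons (-L) x')
          simp only [Fin.tail_cons] at this
          rw [this]
          simp [C, Φ, hcl3 (-L) ⟨le_rfl, by linarith⟩]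
        have hτb : τ (Fin.cons L x') = L := by
          apply (hΦm (T' x')).injective
          have := hτ (Fin.cons L x')
          simp only [Fin.tail_cons] at this
          rw [this]
          simp only [C, Φ, Fin.tail_cons, Fin.cons_zero, hcl3 L ⟨by linarith, le_rfl⟩]
          rw [div_eq_iff (hPp _).ne']
          exact hFGT x'
        rw [hτa, hτb]
      · exact (hτc.comp hcs).continuousOn
      · intro s hs
        rw [min_eq_left (by linarith), max_eq_right (by linarith)] at hs
        have := hd0 (Fin.cons s x') (by simpa using hs)
        simp only [Fin.update_cons_zero, Fin.cons_zero] at this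
        exact this.hasDerivWithinAt
      · exact (hl0c.comp hcs).continuousOn
      · exact (hψc _).continuousOn



lemma bx_vol (n : ℕ) (L : ℝ) (hL : 0 < L) : ∫ _x in bx n L, (1:ℝ) = (2 * L) ^ n := by
  simp only [integral_const, smul_eq_mul, mul_one, Measure.real, bx, Measure.restrict_apply_univ]
  rw [Real.volume_Icc_pi]
  rw [Finset.prod_const, ENNReal.toReal_pow, ENNReal.toReal_ofReal (by linarith)]
  simp; ring

lemma byparts {k : ℕ} {L : ℝ} (hL : 0 < L) (i : Fin (k + 1))
    {τ l h h' : (Fin (k + 1) → ℝ) → ℝ} (hτ : Continuous τ) (hl : Continuous l)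
    (hh : Continuous h) (hh' : Continuous h') (hb : ∀ x, |τ x| ≤ L)
    (hd : ∀ x, x i ∈ Set.Ioo (-L) L →
      HasDerivAt (fun s => τ (Function.update x i s)) (l x) (x i))
    (hdh : ∀ x, HasDerivAt (fun s => h (Function.update x i s)) (h' x) (x i))
    {c : ℝ} (hc : 0 ≤ c) (h1 : ∀ x, x i = L → h x = c) (h2 : ∀ x, x i = -L → h x = c) :
    ∫ x in bx (k + 1) L, l x * h x ≤ (2 * L) ^ (k + 1) * c - ∫ x in bx (k + 1) L, τ x * h' x := by
  have key : ∀ x' : Fin k → ℝ, ∫ s in (-L)..L, l (i.insertNth s x') * h (i.insertNth s x') ≤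
      2 * L * c - ∫ s in (-L)..L, τ (i.insertNth s x') * h' (i.insertNth s x') := by
    intro x'
    have hi : Continuous fun s : ℝ => (i.insertNth s x' : Fin (k + 1) → ℝ) := by fun_prop
    have e : ∀ s r : ℝ, Function.update (i.insertNth s x' : Fin (k + 1) → ℝ) i r =
        (i.insertNth r x' : Fin (k + 1) → ℝ) := by
      intro s r
      ext j
      refine Fin.succAboveCases i ?_ (fun m => ?_) j
      · simp
      · simp
    have := intervalIntegral.integral_mul_deriv_eq_deriv_mul_of_hasDerivAt
      (a := -L) (b := L)
      (u := fun s => τ (i.insertNth s x')) (v := fun s => h (i.insertNth s x'))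
      (u' := fun s => l (i.insertNth s x')) (v' := fun s => h' (i.insertNth s x'))
      (hτ.comp hi).continuousOn (hh.comp hi).continuousOn
      (by
        intro s hs
        rw [min_eq_left (by linarith), max_eq_right (by linarith)] at hs
        have := hd (i.insertNth s x') (by simpa using hs)
        simpa only [e, Fin.insertNth_apply_same] using this)
      (by
        intro s hs
        have := hdh (i.insertNth s x')
        simpa only [e, Fin.insertNth_apply_same] using this)
      ((hl.comp hi).intervalIntegrable _ _) ((hh'.comp hi).intervalIntegrable _ _)
    rw [this, h1 _ (by simp), h2 _ (by simp)]
    have b1 := (abs_le.1 (hb (i.insertNth L x'))).2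
    have b2 := (abs_le.1 (hb (i.insertNth (-L) x'))).1
    nlinarith
  have hlh : Continuous fun x => l x * h x := hl.mul hh
  have hth : Continuous fun x => τ x * h' x := hτ.mul hh'
  rw [bx_fubini hL i hlh, bx_fubini hL i hth]
  have c1 : Continuous fun x' : Fin k → ℝ => ∫ s in (-L)..L, l (i.insertNth s x') * h (i.insertNth s x') := by
    apply intervalIntegral.continuous_parametric_intervalIntegral_of_continuous'
    exact hlh.comp (insertNth_cont i)
  have c2 : Continuous fun x' : Fin k → ℝ => ∫ s in (-L)..L, τ (i.insertNth s x') * h' (i.insertNth s x') := by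
    apply intervalIntegral.continuous_parametric_intervalIntegral_of_continuous'
    exact hth.comp (insertNth_cont i)
  calc _ ≤ ∫ x' in bx k L, (2 * L * c * 1 - ∫ s in (-L)..L, τ (i.insertNth s x') * h' (i.insertNth s x')) := by
        refine integral_mono (bx_int c1) (bx_int (continuous_const.sub c2)) fun x' => ?_
        simpa using key x'
    _ = _ := by
        rw [integral_sub (bx_int continuous_const) (bx_int c2), integral_const_mul, bx_vol k L hL]
        ring

lemma cs_box {n : ℕ} {L : ℝ} {a b : (Fin n → ℝ) → ℝ} (ha : Continuous a) (hb : Continuous b)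
    (ha0 : ∀ x, 0 ≤ a x) (hb0 : ∀ x, 0 ≤ b x) :
    ∫ x in bx n L, a x * b x ≤ √(∫ x in bx n L, a x ^ 2) * √(∫ x in bx n L, b x ^ 2) := by
  have hm : ∀ {a : (Fin n → ℝ) → ℝ}, Continuous a → MemLp a (ENNReal.ofReal 2) (volume.restrict (bx n L)) := by
    intro a ha
    have : ENNReal.ofReal 2 = 2 := by norm_num
    rw [this, memLp_two_iff_integrable_sq ha.aestronglyMeasurable]
    exact bx_int (ha.pow 2)
  have := integral_mul_le_Lp_mul_Lq_of_nonneg (μ := volume.restrict (bx n L)) Real.HolderConjugate.two_two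
    (Filter.Eventually.of_forall ha0) (Filter.Eventually.of_forall hb0) (hm ha) (hm hb)
  simpa [Real.sqrt_eq_rpow] using this

lemma amgm {n : ℕ} (hn : 0 < n) (l : Fin n → ℝ) (hl : ∀ i, 0 < l i) :
    (∏ i, l i) ^ (1 / (n : ℝ)) ≤ (1 / (n : ℝ)) * ∑ i, l i := by
  have hn' : (0:ℝ) < n := by exact_mod_cast hn
  have := Real.geom_mean_le_arith_mean_weighted Finset.univ (fun _ : Fin n => 1 / (n : ℝ)) l
    (fun _ _ => by positivity) (by simp; field_simp) (fun i _ => (hl i).le)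
  rw [Real.finsetProd_rpow _ _ (fun i _ => (hl i).le)] at this
  rwa [← Finset.mul_sum] at this

/-- squared euclidean norm -/
def qf {n : ℕ} (y : Fin n → ℝ) : ℝ := ∑ i, y i ^ 2

lemma qf_nonneg {n : ℕ} (y : Fin n → ℝ) : 0 ≤ qf y := Finset.sum_nonneg fun i _ => sq_nonneg _

lemma qf_cont {n : ℕ} : Continuous (qf : (Fin n → ℝ) → ℝ) := by unfold qf; fun_prop

/-- partial derivative -/
def pd {n : ℕ} (w : (Fin n → ℝ) → ℝ) (x : Fin n → ℝ) : Fin n → ℝ :=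
  fun i => fderiv ℝ w x (Pi.single i 1)

lemma cube_ineq {k : ℕ} (hk : 2 ≤ k) {L : ℝ} (hL : 0 < L) {w : (Fin (k + 1) → ℝ) → ℝ}
    (hw : ContDiff ℝ 1 w) (hw0 : ∀ x, 0 ≤ w x) (hwL : ∀ x i, |x i| = L → w x = 0)
    {ε κ : ℝ} (hε : 0 < ε) (hκ : 0 < κ) {N P Q : ℝ} (hN : N = k + 1) (hP : P = 2 * (N - 1) / (N - 2))
    (hQ : Q = 2 * N / (N - 2))
    (hmass : κ * ∫ y in bx (k + 1) L, (1 + qf y) ^ (-N) = ∫ x in bx (k + 1) L, (w x + ε) ^ Q) :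
    κ ^ (1 - 1 / N) * ∫ y in bx (k + 1) L, (1 + qf y) ^ (-(N - 1)) ≤
      (2 * L) ^ (k + 1) * ε ^ P + P / N * (√(∫ x in bx (k + 1) L, qf (pd w x)) *
        √(κ * ∫ y in bx (k + 1) L, qf y * (1 + qf y) ^ (-N))) := by
  have hk' : (2:ℝ) ≤ k := by exact_mod_cast hk
  have hN2 : 0 < N - 2 := by linarith
  have hN0 : 0 < N := by linarith
  have hf0 : ∀ x, 0 < w x + ε := fun x => by have := hw0 x; linarith
  have hwc : Continuous w := hw.continuous
  have hfc : Continuous fun x => w x + ε := by fun_prop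
  have hq1 : ∀ y : Fin (k + 1) → ℝ, 0 < 1 + qf y := fun y => by have := qf_nonneg y; linarith
  have hqc : Continuous fun y : Fin (k + 1) → ℝ => 1 + qf y := continuous_const.add qf_cont
  have hrc : ∀ a : ℝ, Continuous fun y : Fin (k + 1) → ℝ => (1 + qf y) ^ a := fun a =>
    hqc.rpow_const fun y => Or.inl (hq1 y).ne'
  have hfr : ∀ a : ℝ, Continuous fun x => (w x + ε) ^ a := fun a =>
    hfc.rpow_const fun y => Or.inl (hf0 y).ne'
  obtain ⟨T, lam, hTc, hlc, hTb, hlp, hFG, hder, hpush⟩ := knothe L hL (k + 1)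
    (fun x => (w x + ε) ^ Q) (fun y => κ * (1 + qf y) ^ (-N)) (hfr _) (continuous_const.mul (hrc _))
    (fun x => rpow_pos_of_pos (hf0 x) _) (fun y => mul_pos hκ (rpow_pos_of_pos (hq1 y) _))
    (by rw [integral_const_mul, hmass])
  have hPp : ∀ x, 0 < ∏ i, lam x i := fun x => Finset.prod_pos fun i _ => hlp x i
  have hlci : ∀ i, Continuous fun x => lam x i := fun i => (continuous_apply i).comp hlc
  have hTci : ∀ i, Continuous fun x => T x i := fun i => (continuous_apply i).comp hTc
  have hpdc : ∀ i, Continuous fun x => pd w x i := fun i => by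
    unfold pd
    exact (hw.continuous_fderiv one_ne_zero).clm_apply continuous_const
  have hpdC : Continuous fun x => pd w x := continuous_pi hpdc
  have hPN : P = Q * (1 - 1 / N) := by rw [hP, hQ]; field_simp
  have hPQ : P - 1 = Q / 2 := by rw [hP, hQ]; field_simp; ring
  have hP0 : 0 < P := by rw [hP]; exact div_pos (by linarith) hN2
  -- step 1
  have s1 : κ ^ (1 - 1 / N) * ∫ y in bx (k + 1) L, (1 + qf y) ^ (-(N - 1)) =
      ∫ x in bx (k + 1) L, (∏ i, lam x i) ^ (1 / N) * (w x + ε) ^ P := by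
    rw [← integral_const_mul, ← hpush (fun y => κ ^ (1 - 1 / N) * (1 + qf y) ^ (-(N - 1)))
      (continuous_const.mul (hrc _))]
    refine setIntegral_congr_fun (bx_meas _ L) fun x _ => ?_
    have e1 : (w x + ε) ^ P = (κ * (1 + qf (T x)) ^ (-N) * ∏ i, lam x i) ^ (1 - 1 / N) := by
      rw [← hFG x, ← rpow_mul (hf0 x).le, hPN]
    rw [e1, mul_rpow (mul_pos hκ (rpow_pos_of_pos (hq1 _) _)).le (hPp x).le,
      mul_rpow hκ.le (rpow_pos_of_pos (hq1 _) _).le, ← rpow_mul (hq1 _).le]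
    have e2 : -N * (1 - 1 / N) = -(N - 1) := by field_simp
    have e3 : (∏ i, lam x i) = (∏ i, lam x i) ^ (1 / N) * (∏ i, lam x i) ^ (1 - 1 / N) := by
      rw [← rpow_add (hPp x)]; simp
    rw [e2]
    nth_rewrite 1 [e3]
    ring
  -- step 2
  have s2 : ∫ x in bx (k + 1) L, (∏ i, lam x i) ^ (1 / N) * (w x + ε) ^ P ≤
      ∑ i, 1 / N * ∫ x in bx (k + 1) L, lam x i * (w x + ε) ^ P := by
    have hci : ∀ i, Continuous fun x => lam x i * (w x + ε) ^ P := fun i => (hlci i).mul (hfr P)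
    simp_rw [← integral_const_mul]
    have hci' : ∀ i, Continuous fun x => 1 / N * (lam x i * (w x + ε) ^ P) := fun i =>
      continuous_const.mul (hci i)
    rw [← integral_finsetSum _ fun i _ => bx_int (hci' i)]
    refine integral_mono (bx_int ?_) (bx_int (continuous_finsetSum _ fun i _ => continuous_const.mul (hci i))) fun x => ?_
    · exact ((continuous_finsetProd _ fun i _ => hlci i).rpow_const
        fun x => Or.inl (hPp x).ne').mul (hfr P)
    · have := amgm (by omega : 0 < k + 1) (lam x) (hlp x)
      have hN' : ((k + 1 : ℕ) : ℝ) = N := by rw [hN]; push_cast; ring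
      rw [hN'] at this
      calc _ ≤ (1 / N * ∑ i, lam x i) * (w x + ε) ^ P :=
            mul_le_mul_of_nonneg_right this (rpow_pos_of_pos (hf0 x) _).le
        _ = _ := by rw [mul_assoc, Finset.sum_mul, Finset.mul_sum]
  -- step 3
  have hh'c : ∀ i, Continuous fun x => P * (w x + ε) ^ (P - 1) * pd w x i := fun i =>
    (continuous_const.mul (hfr _)).mul (hpdc i)
  have s3 : ∀ i, ∫ x in bx (k + 1) L, lam x i * (w x + ε) ^ P ≤ (2 * L) ^ (k + 1) * ε ^ P -
      ∫ x in bx (k + 1) L, T x i * (P * (w x + ε) ^ (P - 1) * pd w x i) := by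
    intro i
    refine byparts hL i (hTci i) (hlci i) (hfr P) (hh'c i) (fun x => hTb x i) (fun x hx => hder x i hx)
      ?_ (rpow_pos_of_pos hε _).le ?_ ?_
    · intro x
      have h1 : HasDerivAt (fun s => w (Function.update x i s)) (pd w x i) (x i) := by
        have hx : HasFDerivAt w (fderiv ℝ w x) (Function.update x i (x i)) := by
          rw [Function.update_eq_self]
          exact (hw.differentiable one_ne_zero x).hasFDerivAt
        exact hx.comp_hasDerivAt (x i) (hasDerivAt_update x i (x i))
      have h2 := (h1.add_const ε).rpow_const (p := P) (Or.inl (hf0 _).ne')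
      simp only [Function.update_eq_self] at h2
      convert! h2 using 1
      ring
    · intro x hx
      rw [hwL x i (by rw [hx, abs_of_pos hL]), zero_add]
    · intro x hx
      rw [hwL x i (by rw [hx, abs_neg, abs_of_pos hL]), zero_add]
  -- step 4
  have hTpd : Continuous fun x => T x ⬝ᵥ pd w x := by
    unfold dotProduct
    exact continuous_finsetSum _ fun i _ => (hTci i).mul (hpdc i)
  have s4 : -∑ i, ∫ x in bx (k + 1) L, T x i * (P * (w x + ε) ^ (P - 1) * pd w x i) ≤
      P * (√(∫ x in bx (k + 1) L, qf (pd w x)) *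
        √(κ * ∫ y in bx (k + 1) L, qf y * (1 + qf y) ^ (-N))) := by
    have hci' : ∀ i, Continuous fun x => T x i * (P * (w x + ε) ^ (P - 1) * pd w x i) := fun i =>
      (hTci i).mul (hh'c i)
    rw [← integral_finsetSum _ fun i _ => bx_int (hci' i), ← integral_neg]
    have hqpd : Continuous fun x => √(qf (pd w x)) := (qf_cont.comp hpdC).sqrt
    have hqT : Continuous fun x => (w x + ε) ^ (P - 1) * √(qf (T x)) :=
      (hfr _).mul (qf_cont.comp hTc).sqrt
    have c1 := cs_box (L := L) hqpd hqT (fun x => Real.sqrt_nonneg _)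
      (fun x => mul_nonneg (rpow_pos_of_pos (hf0 x) _).le (Real.sqrt_nonneg _))
    have e1 : ∫ x in bx (k + 1) L, √(qf (pd w x)) ^ 2 = ∫ x in bx (k + 1) L, qf (pd w x) := by
      refine setIntegral_congr_fun (bx_meas _ L) fun x _ => ?_
      exact Real.sq_sqrt (qf_nonneg _)
    have e2 : ∫ x in bx (k + 1) L, ((w x + ε) ^ (P - 1) * √(qf (T x))) ^ 2 =
        κ * ∫ y in bx (k + 1) L, qf y * (1 + qf y) ^ (-N) := by
      rw [← integral_const_mul, ← hpush (fun y => κ * (qf y * (1 + qf y) ^ (-N)))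
        (continuous_const.mul (qf_cont.mul (hrc _)))]
      refine setIntegral_congr_fun (bx_meas _ L) fun x _ => ?_
      rw [mul_pow, Real.sq_sqrt (qf_nonneg _), ← rpow_natCast, ← rpow_mul (hf0 x).le, hPQ]
      have : Q / 2 * ((2 : ℕ) : ℝ) = Q := by push_cast; ring
      rw [this, hFG x]
      ring
    rw [e1, e2] at c1
    refine le_trans ?_ (mul_le_mul_of_nonneg_left c1 hP0.le)
    rw [← integral_const_mul]
    refine integral_mono (bx_int ?_) (bx_int (continuous_const.mul (hqpd.mul hqT))) fun x => ?_
    · exact (continuous_finsetSum _ fun i _ => (hTci i).mul (hh'c i)).neg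
    · simp only
      have e3 : -∑ i, T x i * (P * (w x + ε) ^ (P - 1) * pd w x i) =
          P * (w x + ε) ^ (P - 1) * -∑ i, T x i * pd w x i := by
        rw [mul_neg, Finset.mul_sum]
        congr 1
        exact Finset.sum_congr rfl fun i _ => by ring
      rw [e3]
      have e4 : -∑ i, T x i * pd w x i ≤ √(qf (T x)) * √(qf (pd w x)) := by
        rw [← Real.sqrt_mul (qf_nonneg _)]
        apply le_trans (neg_le_abs _)
        apply Real.abs_le_sqrt
        exact Finset.sum_mul_sq_le_sq_mul_sq _ _ _
      have := mul_le_mul_of_nonneg_left e4 (mul_pos hP0 (rpow_pos_of_pos (hf0 x) (P - 1))).le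
      linarith
  rw [s1]
  refine s2.trans ?_
  calc _ ≤ ∑ i, 1 / N * ((2 * L) ^ (k + 1) * ε ^ P -
      ∫ x in bx (k + 1) L, T x i * (P * (w x + ε) ^ (P - 1) * pd w x i)) :=
        Finset.sum_le_sum fun i _ => mul_le_mul_of_nonneg_left (s3 i) (by positivity)
    _ = (2 * L) ^ (k + 1) * ε ^ P + 1 / N * -∑ i, ∫ x in bx (k + 1) L, T x i * (P * (w x + ε) ^ (P - 1) * pd w x i) := by
        rw [← Finset.mul_sum, Finset.sum_sub_distrib]
        simp only [Finset.sum_const, Finset.card_univ, Fintype.card_fin, nsmul_eq_mul]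
        push_cast
        rw [← hN, mul_sub, ← mul_assoc, one_div_mul_cancel hN0.ne']
        ring
    _ ≤ _ := by
        have := mul_le_mul_of_nonneg_left s4 (by positivity : 0 ≤ 1 / N)
        have e : 1 / N * (P * (√(∫ x in bx (k + 1) L, qf (pd w x)) *
          √(κ * ∫ y in bx (k + 1) L, qf y * (1 + qf y) ^ (-N)))) = P / N * (√(∫ x in bx (k + 1) L, qf (pd w x)) *
          √(κ * ∫ y in bx (k + 1) L, qf y * (1 + qf y) ^ (-N))) := by ring
        linarith



lemma bubble_integrable (d : ℕ) {a : ℝ} (ha : (d : ℝ) / 2 < a) :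
    Integrable (fun y : EuclideanSpace ℝ (Fin d) => (1 + ‖y‖ ^ 2) ^ (-a)) := by
  have := integrable_rpow_neg_one_add_norm_sq (E := EuclideanSpace ℝ (Fin d)) (μ := volume)
    (r := 2 * a) (by rw [finrank_euclideanSpace_fin]; linarith)
  convert this using 3
  ring

lemma lint_ofReal {α : Type*} [MeasurableSpace α] {μ : Measure α} {f : α → ℝ} {c : ℝ}
    (hc : 0 < c) (h0 : 0 ≤ᵐ[μ] f) (h : ∫ x, f x ∂μ = c) :
    ∫⁻ x, ENNReal.ofReal (f x) ∂μ = ENNReal.ofReal c := by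
  have hi : Integrable f μ := by
    by_contra hni
    rw [integral_undef hni] at h
    linarith
  rw [← h, ofReal_integral_eq_lintegral_ofReal hi h0]

lemma bubble_integral (d : ℕ) {a : ℝ} (ha : (d : ℝ) / 2 < a) :
    ∫ y : EuclideanSpace ℝ (Fin d), (1 + ‖y‖ ^ 2) ^ (-a) =
      π ^ ((d : ℝ) / 2) * Gamma (a - d / 2) / Gamma a := by
  have hd0 : (0:ℝ) ≤ (d:ℝ) / 2 := by positivity
  have ha0 : 0 < a := by linarith
  have hΓ := Gamma_pos_of_pos ha0
  have hΓ2 : 0 < Gamma (a - d / 2) := Gamma_pos_of_pos (by linarith)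
  have hp : ∀ y : EuclideanSpace ℝ (Fin d), 0 < 1 + ‖y‖ ^ 2 := fun y => by positivity
  rw [eq_div_iff hΓ.ne']
  have h1 : ∀ y : EuclideanSpace ℝ (Fin d),
      ∫⁻ t in Set.Ioi (0:ℝ), ENNReal.ofReal (t ^ (a - 1) * exp (-((1 + ‖y‖ ^ 2) * t))) =
      ENNReal.ofReal ((1 + ‖y‖ ^ 2) ^ (-a) * Gamma a) := by
    intro y
    apply lint_ofReal (mul_pos (rpow_pos_of_pos (hp y) _) hΓ)
    · filter_upwards [ae_restrict_mem measurableSet_Ioi] with t ht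
      have : (0:ℝ) < t := ht
      simp only [Pi.zero_apply]
      positivity
    · rw [Real.integral_rpow_mul_exp_neg_mul_Ioi ha0 (hp y), one_div, inv_rpow (hp y).le,
        rpow_neg (hp y).le]
  have h2 : ∀ t ∈ Set.Ioi (0:ℝ),
      ∫⁻ y : EuclideanSpace ℝ (Fin d), ENNReal.ofReal (t ^ (a - 1) * exp (-((1 + ‖y‖ ^ 2) * t))) =
      ENNReal.ofReal (π ^ ((d : ℝ) / 2) * (t ^ (a - d / 2 - 1) * exp (-(1 * t)))) := by
    intro t ht
    have ht : (0:ℝ) < t := ht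
    apply lint_ofReal (by positivity)
    · exact Filter.Eventually.of_forall fun y => by simp only [Pi.zero_apply]; positivity
    · have := GaussianFourier.integral_rexp_neg_mul_sq_norm (V := EuclideanSpace ℝ (Fin d)) ht
      rw [finrank_euclideanSpace_fin] at this
      have e : ∀ y : EuclideanSpace ℝ (Fin d), t ^ (a - 1) * exp (-((1 + ‖y‖ ^ 2) * t)) =
          (t ^ (a - 1) * exp (-(1 * t))) * exp (-t * ‖y‖ ^ 2) := by
        intro y
        rw [mul_assoc, ← exp_add]
        congr 2
        ring
      simp_rw [e]
      rw [integral_const_mul, this, div_rpow pi_pos.le ht.le,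
        show a - d / 2 - 1 = (a - 1) - d / 2 by ring, rpow_sub ht (a - 1)]
      ring
  have h3 : ∫⁻ y : EuclideanSpace ℝ (Fin d), ENNReal.ofReal ((1 + ‖y‖ ^ 2) ^ (-a) * Gamma a) =
      ENNReal.ofReal (π ^ ((d : ℝ) / 2) * Gamma (a - d / 2)) := by
    simp_rw [← h1]
    rw [lintegral_lintegral_swap]
    · rw [setLIntegral_congr_fun measurableSet_Ioi h2]
      apply lint_ofReal (by positivity)
      · filter_upwards [ae_restrict_mem measurableSet_Ioi] with t ht
        have : (0:ℝ) < t := ht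
        simp only [Pi.zero_apply]
        positivity
      · rw [integral_const_mul, Real.integral_rpow_mul_exp_neg_mul_Ioi (by linarith) one_pos]
        simp
    · apply Measurable.aemeasurable
      unfold Function.uncurry
      fun_prop
  rw [← integral_mul_const]
  rw [integral_eq_lintegral_of_nonneg_ae, h3, ENNReal.toReal_ofReal (by positivity)]
  · exact Filter.Eventually.of_forall fun y => by
      have := hp y
      simp only [Pi.zero_apply]; positivity
  · exact ((bubble_integrable d ha).mul_const _).aestronglyMeasurable

lemma qf_norm {n : ℕ} (y : EuclideanSpace ℝ (Fin n)) : qf (WithLp.ofLp y) = ‖y‖ ^ 2 := by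
  rw [EuclideanSpace.norm_sq_eq]; simp [qf]

lemma int_pi {n : ℕ} (f : (Fin n → ℝ) → ℝ) :
    ∫ y : EuclideanSpace ℝ (Fin n), f (WithLp.ofLp y) = ∫ y, f y :=
  (PiLp.volume_preserving_ofLp (Fin n)).integral_comp
    (MeasurableEquiv.toLp 2 (Fin n → ℝ)).symm.measurableEmbedding f

lemma integrable_pi {n : ℕ} (f : (Fin n → ℝ) → ℝ) :
    Integrable (fun y : EuclideanSpace ℝ (Fin n) => f (WithLp.ofLp y)) ↔ Integrable f :=
  (PiLp.volume_preserving_ofLp (Fin n)).integrable_comp_emb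
    (MeasurableEquiv.toLp 2 (Fin n → ℝ)).symm.measurableEmbedding

lemma bubble_pi (d : ℕ) {a : ℝ} (ha : (d : ℝ) / 2 < a) :
    Integrable (fun y : Fin d → ℝ => (1 + qf y) ^ (-a)) ∧
    ∫ y : Fin d → ℝ, (1 + qf y) ^ (-a) = π ^ ((d : ℝ) / 2) * Gamma (a - d / 2) / Gamma a := by
  rw [← integrable_pi, ← int_pi]
  simp_rw [qf_norm]
  exact ⟨bubble_integrable d ha, bubble_integral d ha⟩



lemma cube_ineq0 {k : ℕ} (hk : 2 ≤ k) {L : ℝ} (hL : 0 < L) {w : (Fin (k+1) → ℝ) → ℝ}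
    (hw : ContDiff ℝ 1 w) (hw0 : ∀ x, 0 ≤ w x) (hwL : ∀ x i, |x i| = L → w x = 0)
    {N P Q M : ℝ} (hN : N = k + 1) (hP : P = 2 * (N-1)/(N-2)) (hQ : Q = 2*N/(N-2))
    (hM : M = ∫ y in bx (k+1) L, (1 + qf y) ^ (-N)) (hM0 : 0 < M) :
    ((∫ x in bx (k+1) L, (w x) ^ Q) / M) ^ (1 - 1/N) *
      ∫ y in bx (k+1) L, (1 + qf y) ^ (-(N-1)) ≤
    P / N * (√(∫ x in bx (k+1) L, qf (pd w x)) *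
      √((∫ x in bx (k+1) L, (w x) ^ Q) / M * ∫ y in bx (k+1) L, qf y * (1 + qf y) ^ (-N))) := by
  have hN3 : 3 ≤ N := by
    rw [hN]; have : (2:ℝ) ≤ k := by exact_mod_cast hk
    linarith
  have hN2 : 0 < N - 2 := by linarith
  have hQ0 : 0 < Q := by rw [hQ]; positivity
  have hP0 : 0 < P := by rw [hP]; apply div_pos _ hN2; linarith
  have hN1 : 0 ≤ 1 - 1/N := by
    rw [sub_nonneg, div_le_one (by linarith)]; linarith
  have hmc : Continuous fun ε : ℝ => ∫ x in bx (k+1) L, (w x + ε) ^ Q := by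
    apply continuous_parametric_integral_of_continuous (μ := volume) _ (bx_compact _ _)
    have := hw.continuous
    unfold Function.uncurry
    exact Continuous.rpow_const (by fun_prop) fun _ => Or.inr hQ0.le
  set A := ∫ y in bx (k+1) L, (1 + qf y) ^ (-(N-1))
  set B := ∫ y in bx (k+1) L, qf y * (1 + qf y) ^ (-N)
  set D := ∫ x in bx (k+1) L, qf (pd w x)
  have hF : Continuous fun ε : ℝ => ((∫ x in bx (k+1) L, (w x + ε) ^ Q) / M) ^ (1 - 1/N) * A :=
    (Continuous.rpow_const (hmc.div_const M) fun _ => Or.inr hN1).mul_const A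
  have hG : Continuous fun ε : ℝ => (2*L)^(k+1) * ε ^ P + P / N * (√D *
      √((∫ x in bx (k+1) L, (w x + ε) ^ Q) / M * B)) := by
    have : Continuous fun ε : ℝ => ε ^ P := Continuous.rpow_const continuous_id fun _ => Or.inr hP0.le
    fun_prop
  have key : ∀ ε ∈ Set.Ioi (0:ℝ), ((∫ x in bx (k+1) L, (w x + ε) ^ Q) / M) ^ (1 - 1/N) * A ≤
      (2*L)^(k+1) * ε ^ P + P / N * (√D * √((∫ x in bx (k+1) L, (w x + ε) ^ Q) / M * B)) := by
    intro ε hε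
    have hε : 0 < ε := hε
    apply cube_ineq hk hL hw hw0 hwL hε _ hN hP hQ
    · rw [← hM]; field_simp
    · apply div_pos _ hM0
      have hb : volume (bx (k+1) L) ≠ 0 := by
        have hv := bx_vol (k+1) L hL
        intro h
        rw [setIntegral_measure_zero _ h] at hv
        have : 0 < (2*L)^(k+1) := by positivity
        linarith
      rw [setIntegral_pos_iff_support_of_nonneg_ae]
      · have : Function.support (fun x => (w x + ε) ^ Q) = Set.univ := by
          ext x; simp only [Function.mem_support, Set.mem_univ, iff_true]
          have := hw0 x
          positivity
        rw [this, Set.univ_inter]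
        exact pos_iff_ne_zero.2 hb
      · exact Filter.Eventually.of_forall fun x => by
          have := hw0 x
          simp only [Pi.zero_apply]; positivity
      · apply bx_int
        exact Continuous.rpow_const (hw.continuous.add_const _) fun _ => Or.inr hQ0.le
  have := le_of_tendsto_of_tendsto (hF.continuousWithinAt (s := Set.Ioi 0) (x := 0))
    (hG.continuousWithinAt (s := Set.Ioi 0) (x := 0))
    (Filter.eventually_of_mem self_mem_nhdsWithin key)
  simpa [zero_rpow hP0.ne'] using this

lemma bx_tendsto {n : ℕ} {f : (Fin n → ℝ) → ℝ} (hf : Integrable f) :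
    Filter.Tendsto (fun L : ℕ => ∫ y in bx n L, f y) Filter.atTop (nhds (∫ y, f y)) := by
  have hu : (⋃ L : ℕ, bx n (L:ℝ)) = Set.univ := by
    ext x
    simp only [Set.mem_iUnion, Set.mem_univ, iff_true]
    obtain ⟨L, hL⟩ := exists_nat_ge ‖x‖
    refine ⟨L, ?_⟩
    have : ∀ i, |x i| ≤ L := fun i => (norm_le_pi_norm x i).trans hL
    simp only [bx, Set.mem_Icc, Pi.le_def]
    exact ⟨fun i => (abs_le.1 (this i)).1, fun i => (abs_le.1 (this i)).2⟩
  have := tendsto_setIntegral_of_monotone (μ := volume) (s := fun L : ℕ => bx n (L:ℝ)) (f := f)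
    (fun L => bx_meas n L) (by
      intro a b hab
      have : (a:ℝ) ≤ b := by exact_mod_cast hab
      apply Set.Icc_subset_Icc
      · intro i; simpa using this
      · intro i; simpa using this) hf.integrableOn
  rw [hu] at this
  simpa using this

lemma sob_compact {k : ℕ} (hk : 2 ≤ k) {w : (Fin (k+1) → ℝ) → ℝ}
    (hw : ContDiff ℝ 1 w) (hw0 : ∀ x, 0 ≤ w x) (hwc : HasCompactSupport w)
    {N Q : ℝ} (hN : N = k + 1) (hQ : Q = 2*N/(N-2)) :
    (∫ x, (w x) ^ Q) ^ (1 - 2/N) ≤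
      1 / (π * N * (N-2)) * (Gamma N / Gamma (N/2)) ^ (2/N) * ∫ x, qf (pd w x) := by
  have hN3 : 3 ≤ N := by
    rw [hN]; have : (2:ℝ) ≤ k := by exact_mod_cast hk
    linarith
  have hN2 : 0 < N - 2 := by linarith
  have hN0 : 0 < N := by linarith
  have hQ0 : 0 < Q := by rw [hQ]; positivity
  have hNk : ((k+1 : ℕ) : ℝ) = N := by rw [hN]; push_cast; rfl
  have hg1 : 0 < Gamma N := Gamma_pos_of_pos hN0
  have hg2 : 0 < Gamma (N/2) := Gamma_pos_of_pos (by linarith)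
  obtain ⟨P, hP⟩ : ∃ P, P = 2 * (N-1)/(N-2) := ⟨_, rfl⟩
  have hP0 : 0 < P := by rw [hP]; apply div_pos _ hN2; linarith
  have hD0 : 0 ≤ ∫ x, qf (pd w x) := integral_nonneg fun x => qf_nonneg _
  obtain ⟨iM, eM⟩ := bubble_pi (k+1) (a := N) (by rw [hNk]; linarith)
  obtain ⟨iA, eA⟩ := bubble_pi (k+1) (a := N-1) (by rw [hNk]; linarith)
  rw [hNk] at eM eA
  rw [show N - N/2 = N/2 by ring] at eM
  have hsp : ∀ y : Fin (k+1) → ℝ, qf y * (1 + qf y) ^ (-N) =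
      (1 + qf y) ^ (-(N-1)) - (1 + qf y) ^ (-N) := by
    intro y
    have h1 : 0 < 1 + qf y := by have := qf_nonneg y; linarith
    rw [show -(N-1) = -N + 1 by ring, rpow_add h1, rpow_one]; ring
  have iB : Integrable fun y : Fin (k+1) → ℝ => qf y * (1 + qf y) ^ (-N) := by
    simp_rw [hsp]; exact iA.sub iM
  have eB : ∫ y : Fin (k+1) → ℝ, qf y * (1 + qf y) ^ (-N) =
      (∫ y : Fin (k+1) → ℝ, (1 + qf y) ^ (-(N-1))) - ∫ y : Fin (k+1) → ℝ, (1 + qf y) ^ (-N) := by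
    simp_rw [hsp]; exact integral_sub iA iM
  set M := ∫ y : Fin (k+1) → ℝ, (1 + qf y) ^ (-N) with hMdef
  have hM0 : 0 < M := by rw [eM]; positivity
  have hAM : ∫ y : Fin (k+1) → ℝ, (1 + qf y) ^ (-(N-1)) = M * P := by
    have h1 : Gamma N = (N-1) * Gamma (N-1) := by
      have := Gamma_add_one (s := N-1) (by linarith)
      rwa [sub_add_cancel] at this
    have h2 : Gamma (N/2) = (N/2-1) * Gamma (N/2-1) := by
      have := Gamma_add_one (s := N/2-1) (by linarith)
      rwa [sub_add_cancel] at this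
    have h3 : 0 < Gamma (N-1) := Gamma_pos_of_pos (by linarith)
    have h4 : N - 1 ≠ 0 := by linarith
    rw [eA, eM, h1, h2, hP, show N - 1 - N/2 = N/2-1 by ring]
    field_simp
  have hBM : ∫ y : Fin (k+1) → ℝ, qf y * (1 + qf y) ^ (-N) = M * (N/(N-2)) := by
    rw [eB, hAM, hP]; field_simp; ring
  -- cube exhaustion
  have hpc : Continuous fun x => pd w x := by
    unfold pd
    have := hw.continuous_fderiv one_ne_zero
    fun_prop
  obtain ⟨R, hR⟩ := hwc.isCompact.isBounded.subset_closedBall (0 : Fin (k+1) → ℝ)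
  have hz : ∀ L : ℝ, R < L → ∀ x, x ∉ bx (k+1) L → x ∉ tsupport w := by
    intro L hL x hx hxs
    apply hx
    have h1 : ‖x‖ ≤ R := by simpa using hR hxs
    have : ∀ i, |x i| ≤ L := fun i => (norm_le_pi_norm x i).trans (h1.trans hL.le)
    simp only [bx, Set.mem_Icc, Pi.le_def]
    exact ⟨fun i => (abs_le.1 (this i)).1, fun i => (abs_le.1 (this i)).2⟩
  have hm : ∀ L : ℝ, R < L → ∫ x in bx (k+1) L, (w x) ^ Q = ∫ x, (w x) ^ Q := by
    intro L hL
    apply setIntegral_eq_integral_of_forall_compl_eq_zero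
    intro x hx
    rw [image_eq_zero_of_notMem_tsupport (hz L hL x hx), zero_rpow hQ0.ne']
  have hD : ∀ L : ℝ, R < L → ∫ x in bx (k+1) L, qf (pd w x) = ∫ x, qf (pd w x) := by
    intro L hL
    apply setIntegral_eq_integral_of_forall_compl_eq_zero
    intro x hx
    have : fderiv ℝ w x = 0 := by
      by_contra h
      exact hz L hL x hx (support_fderiv_subset ℝ h)
    simp [qf, pd, this]
  set m := ∫ x, (w x) ^ Q with hmdef
  set D := ∫ x, qf (pd w x) with hDdef
  have hm0 : 0 ≤ m := integral_nonneg fun x => rpow_nonneg (hw0 x) _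
  have t1 := bx_tendsto iM
  have t2 := bx_tendsto iA
  have t3 := bx_tendsto iB
  rw [hAM] at t2
  rw [hBM] at t3
  rw [← hMdef] at t1
  have hN1 : 0 ≤ 1 - 1/N := by
    rw [sub_nonneg, div_le_one (by linarith)]; linarith
  have t0 := (tendsto_const_nhds (x := m)).div t1 hM0.ne'
  have key : (m / M) ^ (1 - 1/N) * (M * P) ≤ P / N * (√D * √(m / M * (M * (N/(N-2))))) := by
    apply le_of_tendsto_of_tendsto (((t0).rpow_const (Or.inr hN1)).mul t2)
      ((((t0).mul t3).sqrt.const_mul (√D)).const_mul (P/N))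
    have e1 : ∀ᶠ L : ℕ in Filter.atTop, max R 0 < (L:ℝ) :=
      tendsto_natCast_atTop_atTop.eventually_gt_atTop _
    filter_upwards [e1, t1.eventually (lt_mem_nhds hM0)] with L hL hML
    have hL1 := (le_max_left _ _).trans_lt hL
    have hL2 := (le_max_right _ _).trans_lt hL
    have := cube_ineq0 hk hL2 hw hw0 (by
      intro x i hx
      apply image_eq_zero_of_notMem_tsupport
      intro hxs
      have h1 : ‖x‖ ≤ R := by simpa using hR hxs
      have := norm_le_pi_norm x i
      rw [Real.norm_eq_abs, hx] at this
      linarith) hN hP hQ rfl hML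
    rw [hm _ hL1, hD _ hL1] at this
    exact this
  rcases hm0.eq_or_lt with hm1 | hm1
  · rw [← hm1, zero_rpow]
    · positivity
    · have : 2 / N < 1 := by rw [div_lt_one hN0]; linarith
      linarith
  · set κ := m / M with hκ
    have hκ0 : 0 < κ := by positivity
    have hsq := pow_le_pow_left₀ (by positivity) key 2
    have hk2 : (κ ^ (1 - 1/N)) ^ 2 = κ * κ ^ (1 - 2/N) := by
      rw [← rpow_natCast, ← rpow_mul hκ0.le]
      nth_rw 2 [← rpow_one κ]
      rw [← rpow_add hκ0]
      congr 1; push_cast; ring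
    rw [mul_pow, mul_pow, mul_pow, mul_pow, sq_sqrt hD0, sq_sqrt (by positivity), hk2] at hsq
    have h5 : κ ^ (1 - 2/N) * M ≤ D / (N * (N-2)) := by
      have : (κ * M * P^2) * (κ ^ (1 - 2/N) * M) ≤ (κ * M * P^2) * (D / (N * (N-2))) := by
        calc _ = κ * κ ^ (1 - 2/N) * (M^2 * P^2) := by ring
          _ ≤ _ := hsq
          _ = _ := by field_simp
      exact le_of_mul_le_mul_left this (by positivity)
    have h6 : M ^ (2/N) = π * (Gamma (N/2) / Gamma N) ^ (2/N) := by
      rw [eM, mul_div_assoc, mul_rpow (by positivity) (by positivity), ← rpow_mul pi_pos.le]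
      rw [show N/2 * (2/N) = 1 by field_simp, rpow_one]
    have h7 : κ ^ (1 - 2/N) * M = m ^ (1 - 2/N) * M ^ (2/N) := by
      rw [hκ, div_rpow hm0 hM0.le, rpow_sub hM0, rpow_one]
      field_simp
    rw [h7, h6] at h5
    have h8 : (Gamma (N/2) / Gamma N) ^ (2/N) = ((Gamma N / Gamma (N/2)) ^ (2/N))⁻¹ := by
      rw [← inv_rpow (by positivity), inv_div]
    rw [h8] at h5
    have h9 : 0 < (Gamma N / Gamma (N/2)) ^ (2/N) := by positivity
    calc m ^ (1 - 2/N) = (m ^ (1 - 2/N) * (π * ((Gamma N / Gamma (N/2)) ^ (2/N))⁻¹)) *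
          ((Gamma N / Gamma (N/2)) ^ (2/N) / π) := by field_simp
      _ ≤ D / (N * (N-2)) * ((Gamma N / Gamma (N/2)) ^ (2/N) / π) := by gcongr
      _ = _ := by field_simp



lemma qf_pd {n : ℕ} {u : EuclideanSpace ℝ (Fin n) → ℝ} (hu : ContDiff ℝ 1 u)
    (y : EuclideanSpace ℝ (Fin n)) :
    qf (pd (fun x : Fin n → ℝ => u (WithLp.toLp 2 x)) (WithLp.ofLp y)) = ‖fderiv ℝ u y‖ ^ 2 := by
  have hd : DifferentiableAt ℝ u y := hu.differentiable one_ne_zero y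
  have h1 : HasFDerivAt (fun x : Fin n → ℝ => u (WithLp.toLp 2 x))
      ((fderiv ℝ u y).comp ((EuclideanSpace.equiv (Fin n) ℝ).symm : (Fin n → ℝ) →L[ℝ] _))
      (WithLp.ofLp y) := by
    have h2 : HasFDerivAt (fun x : Fin n → ℝ => (WithLp.toLp 2 x : EuclideanSpace ℝ (Fin n)))
        ((EuclideanSpace.equiv (Fin n) ℝ).symm : (Fin n → ℝ) →L[ℝ] _) (WithLp.ofLp y) :=
      (EuclideanSpace.equiv (Fin n) ℝ).symm.hasFDerivAt
    exact HasFDerivAt.comp (g := u) (WithLp.ofLp y) (by simpa using hd.hasFDerivAt) h2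
  have h3 : ‖fderiv ℝ u y‖ = ‖gradient u y‖ := by
    simp [gradient]
  rw [h3, ← qf_norm]
  unfold qf
  refine Finset.sum_congr rfl fun i _ => ?_
  congr 1
  unfold pd
  rw [h1.fderiv]
  have h4 : inner ℝ (gradient u y) (EuclideanSpace.single i (1:ℝ)) =
      fderiv ℝ u y (EuclideanSpace.single i (1:ℝ)) := by
    simp [gradient]
  rw [EuclideanSpace.inner_single_right] at h4
  simp at h4
  rw [h4]
  rfl

lemma sob_eucl {d : ℕ} (hd : 3 ≤ d) {u : EuclideanSpace ℝ (Fin d) → ℝ}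
    (hu : ContDiff ℝ 1 u) (hu0 : ∀ x, 0 ≤ u x) (hc : HasCompactSupport u) :
    (∫ x, u x ^ (2 * (d:ℝ) / ((d:ℝ)-2))) ^ (1 - 2/(d:ℝ)) ≤
      (1 / (π * d * ((d:ℝ)-2)) * (Gamma d / Gamma ((d:ℝ)/2)) ^ (2/(d:ℝ))) *
        ∫ x, ‖fderiv ℝ u x‖ ^ 2 := by
  obtain ⟨k, rfl⟩ : ∃ k, d = k + 1 := ⟨d - 1, by omega⟩
  have h1 : ContDiff ℝ 1 (fun x : Fin (k+1) → ℝ => u (WithLp.toLp 2 x)) :=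
    hu.comp ((EuclideanSpace.equiv (Fin (k+1)) ℝ).symm.contDiff)
  have h2 : HasCompactSupport (fun x : Fin (k+1) → ℝ => u (WithLp.toLp 2 x)) :=
    hc.comp_homeomorph (EuclideanSpace.equiv (Fin (k+1)) ℝ).symm.toHomeomorph
  have := sob_compact (by omega : 2 ≤ k) h1 (fun x => hu0 _) h2 (N := ((k+1:ℕ):ℝ)) (by push_cast; rfl) rfl
  rw [← int_pi, ← int_pi] at this
  simp only [qf_pd hu] at this
  exact this

lemma tail_tendsto {E : Type*} [NormedAddCommGroup E] [MeasurableSpace E] [BorelSpace E]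
    {μ : Measure E} {f : E → ℝ} (hf : Integrable f μ) :
    Filter.Tendsto (fun n : ℕ => ∫ x in {x : E | (n:ℝ) ≤ ‖x‖}, f x ∂μ) Filter.atTop (nhds 0) := by
  have := tendsto_setIntegral_of_antitone (μ := μ) (s := fun n : ℕ => {x : E | (n:ℝ) ≤ ‖x‖}) (f := f)
    (fun n => (isClosed_le continuous_const continuous_norm).measurableSet) (by
      intro a b hab x hx
      have h : (a:ℝ) ≤ b := by exact_mod_cast hab
      exact h.trans hx) ⟨0, hf.integrableOn⟩
  have he : (⋂ n : ℕ, {x : E | (n:ℝ) ≤ ‖x‖}) = ∅ := by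
    ext x
    simp only [Set.mem_iInter, Set.mem_ofPred_eq, Set.mem_empty_iff_false, iff_false, not_forall, not_le]
    exact exists_nat_gt _
  rw [he] at this
  simpa using this

lemma holder_tail {d : ℕ} (hd : 3 ≤ d) {u g : EuclideanSpace ℝ (Fin d) → ℝ}
    (hu : Continuous u) (hu0 : ∀ x, 0 ≤ u x) (hg : Continuous g) (hg0 : ∀ x, 0 ≤ g x)
    (hgc : HasCompactSupport g)
    (hi : Integrable fun x => u x ^ (2 * (d:ℝ) / ((d:ℝ)-2)))
    {R : ℝ} (hgR : ∀ x, ‖x‖ < R → g x = 0) :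
    ∫ x, u x ^ 2 * g x ^ 2 ≤ (∫ x in {x | R ≤ ‖x‖}, u x ^ (2 * (d:ℝ) / ((d:ℝ)-2))) ^ (1/((d:ℝ)/((d:ℝ)-2))) *
      (∫ x, g x ^ (d:ℝ)) ^ (1/((d:ℝ)/2)) := by
  have hd3 : (3:ℝ) ≤ d := by exact_mod_cast hd
  have hd2 : 0 < (d:ℝ) - 2 := by linarith
  have hpq : ((d:ℝ)/((d:ℝ)-2)).HolderConjugate ((d:ℝ)/2) := by
    rw [Real.holderConjugate_iff]
    refine ⟨by rw [one_lt_div hd2]; linarith, ?_⟩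
    field_simp
    ring
  set s := {x : EuclideanSpace ℝ (Fin d) | R ≤ ‖x‖} with hs
  have hsm : MeasurableSet s := (isClosed_le continuous_const continuous_norm).measurableSet
  have e1 : ∫ x, u x ^ 2 * g x ^ 2 = ∫ x in s, u x ^ 2 * g x ^ 2 := by
    symm
    apply setIntegral_eq_integral_of_forall_compl_eq_zero
    intro x hx
    rw [hgR x (by simpa [hs] using hx)]; ring
  have p1 : ∀ x, (u x ^ 2) ^ ((d:ℝ)/((d:ℝ)-2)) = u x ^ (2 * (d:ℝ) / ((d:ℝ)-2)) := by
    intro x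
    rw [← rpow_natCast, ← rpow_mul (hu0 x)]
    congr 1; push_cast; ring
  have p2 : ∀ x, (g x ^ 2) ^ ((d:ℝ)/2) = g x ^ (d:ℝ) := by
    intro x
    rw [← rpow_natCast, ← rpow_mul (hg0 x)]
    congr 1; push_cast; ring
  have ig : Integrable fun x => g x ^ (d:ℝ) := by
    apply Continuous.integrable_of_hasCompactSupport
    · exact hg.rpow_const fun _ => Or.inr (by linarith)
    · exact hgc.comp_left (g := fun t : ℝ => t ^ (d:ℝ)) (zero_rpow (by linarith))
  have hp0 : 0 < (d:ℝ)/((d:ℝ)-2) := by positivity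
  have hq0 : 0 < (d:ℝ)/2 := by positivity
  have hol := integral_mul_le_Lp_mul_Lq_of_nonneg (μ := volume.restrict s) hpq
    (f := fun x => u x ^ 2) (g := fun x => g x ^ 2)
    (Filter.Eventually.of_forall fun x => sq_nonneg _)
    (Filter.Eventually.of_forall fun x => sq_nonneg _)
    (by
      rw [← integrable_norm_rpow_iff (by fun_prop) (by simpa using hp0) (by simp)]
      rw [ENNReal.toReal_ofReal hp0.le]
      simp only [norm_of_nonneg (sq_nonneg _), p1]
      exact hi.integrableOn)
    (by
      rw [← integrable_norm_rpow_iff (by fun_prop) (by simpa using hq0) (by simp)]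
      rw [ENNReal.toReal_ofReal hq0.le]
      simp only [norm_of_nonneg (sq_nonneg _), p2]
      exact ig.integrableOn)
  simp only [p1, p2] at hol
  rw [e1]
  refine hol.trans ?_
  apply mul_le_mul_of_nonneg_left
  · apply rpow_le_rpow (integral_nonneg fun x => rpow_nonneg (hg0 x) _) _ (by positivity)
    exact setIntegral_le_integral ig (Filter.Eventually.of_forall fun x => rpow_nonneg (hg0 x) _)
  · exact rpow_nonneg (integral_nonneg fun x => rpow_nonneg (hu0 x) _) _



lemma cutoff (d : ℕ) : ∃ (χ : ℕ → EuclideanSpace ℝ (Fin d) → ℝ) (C : ℝ), 0 ≤ C ∧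
    (∀ n, ContDiff ℝ 1 (χ n)) ∧ (∀ n, HasCompactSupport (χ n)) ∧ (∀ n x, 0 ≤ χ n x) ∧
    (∀ n x, χ n x ≤ 1) ∧ (∀ n x, ‖x‖ < (n + 1 : ℕ) → χ n x = 1) ∧
    (∀ n x, ‖x‖ < (n + 1 : ℕ) → ‖fderiv ℝ (χ n) x‖ = 0) ∧
    (∀ n, ∫ x, ‖fderiv ℝ (χ n) x‖ ^ (d:ℝ) = C) := by
  let f : ContDiffBump (0 : EuclideanSpace ℝ (Fin d)) := ⟨1, 2, one_pos, one_lt_two⟩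
  have hR : ∀ n : ℕ, (0:ℝ) < ((n+1 : ℕ) : ℝ) := fun n => by positivity
  have hone : ∀ n : ℕ, ∀ x : EuclideanSpace ℝ (Fin d), ‖x‖ < (n+1:ℕ) →
      f ((((n+1:ℕ):ℝ)⁻¹) • x) = 1 := by
    intro n x hx
    apply f.one_of_mem_closedBall
    rw [mem_closedBall_zero_iff, norm_smul, norm_inv, norm_of_nonneg (hR n).le]
    change _ ≤ (1:ℝ)
    rw [inv_mul_le_iff₀ (hR n)]
    linarith
  have hcd : ContDiff ℝ 1 f := f.contDiff
  refine ⟨fun n x => f ((((n+1:ℕ):ℝ)⁻¹) • x), ∫ x, ‖fderiv ℝ f x‖ ^ (d:ℝ), ?_, ?_, ?_, ?_, ?_, ?_, ?_, ?_⟩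
  · exact integral_nonneg fun x => rpow_nonneg (norm_nonneg _) _
  · intro n
    exact hcd.comp (contDiff_const_smul _)
  · intro n
    exact f.hasCompactSupport.comp_smul (inv_ne_zero (hR n).ne')
  · intro n x; exact f.nonneg
  · intro n x; exact f.le_one
  · exact hone
  · intro n x hx
    have : (fun x => f ((((n+1:ℕ):ℝ)⁻¹) • x)) =ᶠ[nhds x] fun _ => 1 := by
      filter_upwards [(isOpen_lt continuous_norm continuous_const).mem_nhds hx] with y hy
      exact hone n y hy
    rw [this.fderiv_eq]
    simp
  · intro n
    have h1 : ∀ x, ‖fderiv ℝ (fun x => f ((((n+1:ℕ):ℝ)⁻¹) • x)) x‖ ^ (d:ℝ) =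
        ((((n+1:ℕ):ℝ)⁻¹) ^ (d:ℝ)) * ‖fderiv ℝ f ((((n+1:ℕ):ℝ)⁻¹) • x)‖ ^ (d:ℝ) := by
      intro x
      rw [fderiv_comp_smul, norm_smul, norm_inv, norm_of_nonneg (hR n).le,
        mul_rpow (by positivity) (norm_nonneg _)]
    simp_rw [h1]
    rw [integral_const_mul, Measure.integral_comp_inv_smul_of_nonneg volume
      (fun x => ‖fderiv ℝ f x‖ ^ (d:ℝ)) (hR n).le, finrank_euclideanSpace_fin, smul_eq_mul,
      rpow_natCast, ← mul_assoc, ← mul_pow, inv_mul_cancel₀ (hR n).ne', one_pow, one_mul]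

lemma sob_full {d : ℕ} (hd : 3 ≤ d) {u : EuclideanSpace ℝ (Fin d) → ℝ}
    (hu : ContDiff ℝ 1 u) (hu0 : ∀ x, 0 ≤ u x)
    (hi : Integrable fun x => u x ^ (2 * (d:ℝ) / ((d:ℝ)-2)))
    (hg : Integrable fun x => ‖fderiv ℝ u x‖ ^ 2) :
    (∫ x, u x ^ (2 * (d:ℝ) / ((d:ℝ)-2))) ^ (1 - 2/(d:ℝ)) ≤
      (1 / (π * d * ((d:ℝ)-2)) * (Gamma d / Gamma ((d:ℝ)/2)) ^ (2/(d:ℝ))) *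
        ∫ x, ‖fderiv ℝ u x‖ ^ 2 := by
  have hd3 : (3:ℝ) ≤ d := by exact_mod_cast hd
  have hd2 : 0 < (d:ℝ) - 2 := by linarith
  have hd0 : 0 < (d:ℝ) := by linarith
  have hΓ1 : 0 < Gamma (d:ℝ) := Gamma_pos_of_pos hd0
  have hΓ2 : 0 < Gamma ((d:ℝ)/2) := Gamma_pos_of_pos (by linarith)
  have hS0 : 0 < 1 / (π * d * ((d:ℝ)-2)) * (Gamma d / Gamma ((d:ℝ)/2)) ^ (2/(d:ℝ)) := by positivity
  obtain ⟨χ, C, hC, hχ, hχc, hχ0, hχ1, hχe, hχg, hχC⟩ := cutoff d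
  have hsob := fun n => sob_eucl hd (u := fun x => χ n x * u x) ((hχ n).mul hu)
    (fun x => mul_nonneg (hχ0 n x) (hu0 x)) ((hχc n).mul_right)
  set S := 1 / (π * d * ((d:ℝ)-2)) * (Gamma d / Gamma ((d:ℝ)/2)) ^ (2/(d:ℝ)) with hS
  set Q := 2 * (d:ℝ) / ((d:ℝ)-2) with hQ
  have hQ0 : 0 < Q := by positivity
  set D := ∫ x, ‖fderiv ℝ u x‖ ^ 2 with hD
  have hfu := hu.continuous_fderiv one_ne_zero
  have hfχ := fun n => (hχ n).continuous_fderiv one_ne_zero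
  have hcu := hu.continuous
  -- left side limit
  have tl : Filter.Tendsto (fun n => ∫ x, (χ n x * u x) ^ Q) Filter.atTop (nhds (∫ x, u x ^ Q)) := by
    apply tendsto_integral_of_dominated_convergence (fun x => u x ^ Q)
    · intro n
      have := (hχ n).continuous
      exact (Continuous.rpow_const (by fun_prop) fun _ => Or.inr hQ0.le).aestronglyMeasurable
    · exact hi
    · intro n
      refine Filter.Eventually.of_forall fun x => ?_
      have := mul_nonneg (hχ0 n x) (hu0 x)
      rw [norm_of_nonneg (rpow_nonneg this _)]
      apply rpow_le_rpow this _ hQ0.le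
      exact mul_le_of_le_one_left (hu0 x) (hχ1 n x)
    · refine Filter.Eventually.of_forall fun x => ?_
      apply tendsto_const_nhds.congr'
      obtain ⟨n0, hn0⟩ := exists_nat_gt ‖x‖
      filter_upwards [Filter.eventually_ge_atTop n0] with n hn
      rw [hχe n x, one_mul]
      have : (n0:ℝ) ≤ n := by exact_mod_cast hn
      push_cast; linarith
  -- error term
  have hgχ : ∀ n, HasCompactSupport fun x => ‖fderiv ℝ (χ n) x‖ := fun n => ((hχc n).fderiv ℝ).norm
  let E : ℕ → ℝ := fun n => ∫ x, u x ^ 2 * ‖fderiv ℝ (χ n) x‖ ^ 2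
  have hE : ∀ n, E n ≤ (∫ x in {x | ((n+1:ℕ):ℝ) ≤ ‖x‖}, u x ^ Q) ^ (1/((d:ℝ)/((d:ℝ)-2))) *
      C ^ (1/((d:ℝ)/2)) := by
    intro n
    have := holder_tail hd (g := fun x => ‖fderiv ℝ (χ n) x‖) hcu hu0 (hfχ n).norm
      (fun x => norm_nonneg _) (hgχ n) hi (R := (n+1:ℕ)) (hχg n)
    rw [hχC n] at this
    exact this
  have hE0 : ∀ n, 0 ≤ E n := fun n => integral_nonneg fun x => by positivity
  have iE : ∀ n, Integrable fun x => u x ^ 2 * ‖fderiv ℝ (χ n) x‖ ^ 2 := by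
    intro n
    have := hfχ n
    apply Continuous.integrable_of_hasCompactSupport (by fun_prop)
    exact HasCompactSupport.mul_left ((hgχ n).comp_left (g := fun t : ℝ => t ^ 2) (by simp))
  have hpp : 0 < 1/((d:ℝ)/((d:ℝ)-2)) := by positivity
  have tE : Filter.Tendsto E Filter.atTop (nhds 0) := by
    have t1 := (tail_tendsto hi).comp (Filter.tendsto_add_atTop_nat 1)
    have t2 := (t1.rpow_const (p := 1/((d:ℝ)/((d:ℝ)-2))) (Or.inr hpp.le)).mul_const (C ^ (1/((d:ℝ)/2)))
    rw [zero_rpow hpp.ne', zero_mul] at t2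
    exact squeeze_zero hE0 hE t2
  have hgrad : ∀ δ > 0, ∀ n, ∫ x, ‖fderiv ℝ (fun x => χ n x * u x) x‖ ^ 2 ≤
      (1 + δ) * D + (1 + 1/δ) * E n := by
    intro δ hδ n
    have hpt : ∀ x, ‖fderiv ℝ (fun x => χ n x * u x) x‖ ^ 2 ≤
        (1 + δ) * ‖fderiv ℝ u x‖ ^ 2 + (1 + 1/δ) * (u x ^ 2 * ‖fderiv ℝ (χ n) x‖ ^ 2) := by
      intro x
      rw [fderiv_fun_mul ((hχ n).differentiable one_ne_zero x) (hu.differentiable one_ne_zero x)]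
      set a := ‖fderiv ℝ u x‖ with ha
      set b := u x * ‖fderiv ℝ (χ n) x‖ with hb
      have hb0 : 0 ≤ b := mul_nonneg (hu0 x) (norm_nonneg _)
      have h1 : ‖χ n x • fderiv ℝ u x + u x • fderiv ℝ (χ n) x‖ ≤ a + b := by
        refine (norm_add_le _ _).trans ?_
        rw [norm_smul, norm_smul, norm_of_nonneg (hχ0 n x), norm_of_nonneg (hu0 x)]
        gcongr
        exact mul_le_of_le_one_left (norm_nonneg _) (hχ1 n x)
      have h2 := pow_le_pow_left₀ (norm_nonneg _) h1 2
      refine h2.trans ?_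
      rw [← mul_pow, ← hb]
      have h3 : 0 ≤ (δ * a - b) ^ 2 / δ := by positivity
      have h4 : (δ * a - b) ^ 2 / δ = δ * a^2 - 2 * a * b + 1/δ * b^2 := by field_simp; ring
      nlinarith
    have i1 := (hg.const_mul (1+δ)).add ((iE n).const_mul (1+1/δ))
    refine (integral_mono_of_nonneg (Filter.Eventually.of_forall fun x => by positivity) i1
      (Filter.Eventually.of_forall hpt)).trans ?_
    apply le_of_eq
    simp only [Pi.add_apply]
    rw [integral_add (hg.const_mul (1+δ)) ((iE n).const_mul (1+1/δ)), integral_const_mul,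
      integral_const_mul]
  have hexp : 0 ≤ 1 - 2/(d:ℝ) := by
    rw [sub_nonneg, div_le_one hd0]; linarith
  have hδ : ∀ δ > 0, (∫ x, u x ^ Q) ^ (1 - 2/(d:ℝ)) ≤ S * ((1 + δ) * D) := by
    intro δ hδ
    have t1 := tl.rpow_const (p := 1 - 2/(d:ℝ)) (Or.inr hexp)
    have t2 := ((tE.const_mul (1+1/δ)).const_add ((1+δ)*D)).const_mul S
    rw [mul_zero, add_zero] at t2
    apply le_of_tendsto_of_tendsto' t1 t2
    intro n
    exact (hsob n).trans (mul_le_mul_of_nonneg_left (hgrad δ hδ n) hS0.le)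
  have hG : Continuous fun δ : ℝ => S * ((1 + δ) * D) := by fun_prop
  have := ge_of_tendsto (hG.continuousWithinAt (s := Set.Ioi 0) (x := 0))
    (Filter.eventually_of_mem self_mem_nhdsWithin hδ)
  simpa using this

/-- finite-time extinction of the fast diffusion flow via the Sobolev
inequality: differential inequality for `J`, its integrated form, and the resulting
bound on the extinction time. -/
theorem flow_extinction (d : ℕ) (hd : 3 ≤ d) (T : ℝ) (hT : 0 < T)
    (v : ℝ → EuclideanSpace ℝ (Fin d) → ℝ)
    (hpos : ∀ t ∈ Set.Ico (0 : ℝ) T, ∀ x, 0 < v t x)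
    (hsmooth : ContDiffOn ℝ (⊤ : ℕ∞) (fun p : ℝ × EuclideanSpace ℝ (Fin d) => v p.1 p.2)
      (Set.Ico (0 : ℝ) T ×ˢ (Set.univ : Set (EuclideanSpace ℝ (Fin d)))))
    (hpde : ∀ t ∈ Set.Ico (0 : ℝ) T, ∀ x,
      HasDerivAt (fun s => v s x)
        (lap d (fun y => v t y ^ (((d : ℝ) - 2) / ((d : ℝ) + 2))) x) t)
    (hmem : ∀ t ∈ Set.Ico (0 : ℝ) T,
      MemD12 d (fun x => v t x ^ (((d : ℝ) - 2) / ((d : ℝ) + 2))))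
    (J J' : ℝ → ℝ)
    (hint : ∀ t ∈ Set.Ico (0 : ℝ) T,
      Integrable (fun x => v t x ^ (2 * (d : ℝ) / ((d : ℝ) + 2))))
    (hJdef : ∀ t ∈ Set.Ico (0 : ℝ) T,
      J t = ∫ x, v t x ^ (2 * (d : ℝ) / ((d : ℝ) + 2)))
    (hJ' : ∀ t ∈ Set.Ico (0 : ℝ) T, HasDerivAt J (J' t) t)
    (hJ'eq : ∀ t ∈ Set.Ico (0 : ℝ) T,
      J' t = -((((d : ℝ) - 2) / ((d : ℝ) + 2)) + 1) *
        ∫ x, ‖gradient (fun y => v t y ^ (((d : ℝ) - 2) / ((d : ℝ) + 2))) x‖ ^ 2) :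
    (∀ t ∈ Set.Ico (0 : ℝ) T,
      J' t ≤ -(2 * (d : ℝ) / ((d : ℝ) + 2)) * (sobolevConst d)⁻¹ *
        J t ^ (1 - 2 / (d : ℝ))) ∧
    (∀ t ∈ Set.Ico (0 : ℝ) T,
      J t ^ ((2 : ℝ) / (d : ℝ)) ≤
        J 0 ^ ((2 : ℝ) / (d : ℝ)) - 4 / (((d : ℝ) + 2) * sobolevConst d) * t) ∧
    T ≤ ((d : ℝ) + 2) / 4 * sobolevConst d * J 0 ^ ((2 : ℝ) / (d : ℝ)) := by
  have hd3 : (3:ℝ) ≤ d := by exact_mod_cast hd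
  have hd2 : 0 < (d:ℝ) - 2 := by linarith
  have hd0 : 0 < (d:ℝ) := by linarith
  have hΓ1 : 0 < Gamma (d:ℝ) := Gamma_pos_of_pos hd0
  have hΓ2 : 0 < Gamma ((d:ℝ)/2) := Gamma_pos_of_pos (by linarith)
  have hS0 : 0 < sobolevConst d := by unfold sobolevConst; positivity
  have hvs : ∀ t ∈ Set.Ico (0:ℝ) T, ContDiff ℝ 1 (v t) := by
    intro t ht
    have h1 : ContDiffOn ℝ (⊤ : ℕ∞) (fun x : EuclideanSpace ℝ (Fin d) => v t x) Set.univ :=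
      hsmooth.comp (f := fun x : EuclideanSpace ℝ (Fin d) => (t, x))
        (contDiff_const.prodMk contDiff_id).contDiffOn (fun x _ => ⟨ht, Set.mem_univ _⟩)
    exact (contDiffOn_univ.1 h1).of_le (by exact_mod_cast le_top)
  have hpw : ∀ t ∈ Set.Ico (0:ℝ) T, ∀ x,
      (v t x ^ (((d : ℝ) - 2) / ((d : ℝ) + 2))) ^ (2 * (d:ℝ) / ((d:ℝ)-2)) =
        v t x ^ (2 * (d : ℝ) / ((d : ℝ) + 2)) := by
    intro t ht x
    rw [← rpow_mul (hpos t ht x).le]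
    congr 1
    field_simp
  have hsob : ∀ t ∈ Set.Ico (0:ℝ) T, J t ^ (1 - 2/(d:ℝ)) ≤ sobolevConst d *
      ∫ x, ‖gradient (fun y => v t y ^ (((d : ℝ) - 2) / ((d : ℝ) + 2))) x‖ ^ 2 := by
    intro t ht
    have hn : ∀ x, ‖gradient (fun y => v t y ^ (((d : ℝ) - 2) / ((d : ℝ) + 2))) x‖ =
        ‖fderiv ℝ (fun y => v t y ^ (((d : ℝ) - 2) / ((d : ℝ) + 2))) x‖ := by
      intro x; simp [gradient]
    obtain ⟨-, hg, -⟩ := hmem t ht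
    simp only [hn] at hg ⊢
    have := sob_full hd (u := fun y => v t y ^ (((d : ℝ) - 2) / ((d : ℝ) + 2)))
      ((hvs t ht).rpow_const_of_ne fun x => (hpos t ht x).ne')
      (fun x => rpow_nonneg (hpos t ht x).le _)
      (by simp only [hpw t ht]; exact hint t ht) hg
    simp only [hpw t ht] at this
    rw [← hJdef t ht] at this
    exact this
  have hJpos : ∀ t ∈ Set.Ico (0:ℝ) T, 0 < J t := by
    intro t ht
    rw [hJdef t ht]
    have hp : ∀ x, 0 < v t x ^ (2 * (d : ℝ) / ((d : ℝ) + 2)) := fun x => rpow_pos_of_pos (hpos t ht x) _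
    rw [integral_pos_iff_support_of_nonneg (fun x => (hp x).le) (hint t ht)]
    have : Function.support (fun x => v t x ^ (2 * (d : ℝ) / ((d : ℝ) + 2))) = Set.univ := by
      ext x; simp only [Function.mem_support, Set.mem_univ, iff_true]; exact (hp x).ne'
    rw [this]
    exact isOpen_univ.measure_pos volume Set.univ_nonempty
  have c1 : ∀ t ∈ Set.Ico (0 : ℝ) T,
      J' t ≤ -(2 * (d : ℝ) / ((d : ℝ) + 2)) * (sobolevConst d)⁻¹ * J t ^ (1 - 2 / (d : ℝ)) := by
    intro t ht
    rw [hJ'eq t ht]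
    have h1 := hsob t ht
    have h2 : (sobolevConst d)⁻¹ * J t ^ (1 - 2 / (d : ℝ)) ≤
        ∫ x, ‖gradient (fun y => v t y ^ (((d : ℝ) - 2) / ((d : ℝ) + 2))) x‖ ^ 2 := by
      rw [inv_mul_le_iff₀ hS0]; exact h1
    have h3 : ((d : ℝ) - 2) / ((d : ℝ) + 2) + 1 = 2 * (d : ℝ) / ((d : ℝ) + 2) := by
      field_simp; ring
    rw [h3, mul_assoc, neg_mul, neg_mul, neg_le_neg_iff]
    exact mul_le_mul_of_nonneg_left h2 (by positivity)
  have c2 : ∀ t ∈ Set.Ico (0 : ℝ) T,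
      J t ^ ((2 : ℝ) / (d : ℝ)) ≤
        J 0 ^ ((2 : ℝ) / (d : ℝ)) - 4 / (((d : ℝ) + 2) * sobolevConst d) * t := by
    intro t ht
    set c := 4 / (((d : ℝ) + 2) * sobolevConst d) with hc
    have hder : ∀ s ∈ Set.Ico (0:ℝ) T, HasDerivAt (fun s => J s ^ ((2 : ℝ) / (d : ℝ)) + c * s)
        (J' s * (2/(d:ℝ)) * J s ^ ((2:ℝ)/(d:ℝ) - 1) + c * 1) s := fun s hs =>
      ((hJ' s hs).rpow_const (Or.inl (hJpos s hs).ne')).add ((hasDerivAt_id s).const_mul c)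
    have hsub : ∀ s ∈ Set.Icc 0 t, s ∈ Set.Ico (0:ℝ) T := fun s hs => ⟨hs.1, hs.2.trans_lt ht.2⟩
    have hanti : AntitoneOn (fun s => J s ^ ((2 : ℝ) / (d : ℝ)) + c * s) (Set.Icc 0 t) := by
      apply antitoneOn_of_deriv_nonpos (convex_Icc 0 t)
      · exact fun s hs => (hder s (hsub s hs)).continuousAt.continuousWithinAt
      · exact fun s hs => (hder s (hsub s (interior_subset hs))).differentiableAt.differentiableWithinAt
      · intro s hs
        have hs' := hsub s (interior_subset hs)
        rw [(hder s hs').deriv]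
        have hp := hJpos s hs'
        have h1 := c1 s hs'
        have h2 : 0 < (2/(d:ℝ)) * J s ^ ((2:ℝ)/(d:ℝ) - 1) := by positivity
        have h3 := mul_le_mul_of_nonneg_right h1 h2.le
        have h4 : J s ^ (1 - 2 / (d : ℝ)) * J s ^ ((2:ℝ)/(d:ℝ) - 1) = 1 := by
          rw [← rpow_add hp]; simp
        have h5 : -(2 * (d : ℝ) / ((d : ℝ) + 2)) * (sobolevConst d)⁻¹ * J s ^ (1 - 2 / (d : ℝ)) *
            ((2/(d:ℝ)) * J s ^ ((2:ℝ)/(d:ℝ) - 1)) = -c := by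
          calc _ = -(2 * (d : ℝ) / ((d : ℝ) + 2)) * (sobolevConst d)⁻¹ * (2/(d:ℝ)) *
                (J s ^ (1 - 2 / (d : ℝ)) * J s ^ ((2:ℝ)/(d:ℝ) - 1)) := by ring
            _ = -c := by rw [h4, hc]; field_simp; ring
        rw [h5] at h3
        linarith
    have := hanti (Set.left_mem_Icc.2 ht.1) (Set.right_mem_Icc.2 ht.1) ht.1
    simp only [mul_zero, add_zero] at this
    linarith
  refine ⟨c1, c2, ?_⟩
  by_contra hcon
  push Not at hcon
  set b := ((d : ℝ) + 2) / 4 * sobolevConst d * J 0 ^ ((2 : ℝ) / (d : ℝ)) with hb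
  have hJ0 := hJpos 0 ⟨le_rfl, hT⟩
  have hb0 : 0 ≤ b := by positivity
  have h1 := c2 b ⟨hb0, hcon⟩
  have h2 : 0 < J b ^ ((2 : ℝ) / (d : ℝ)) := rpow_pos_of_pos (hJpos b ⟨hb0, hcon⟩) _
  have h3 : 4 / (((d : ℝ) + 2) * sobolevConst d) * b = J 0 ^ ((2 : ℝ) / (d : ℝ)) := by
    rw [hb]; field_simp
  linarith
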